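/- arXiv:2405.14509 — 2 statements merged into one kernel-verified Lean document; each statement's English description precedes it below -/
import Mathlib

section
/- For x > 0, the digamma function satisfies log(x) - ψ(x) = 1/(2x) + 2∫₀^∞ t / ((t² + x²)(exp(2πt) - 1)) dt, where ψ is the digamma function (derivative of log Γ). -/
open Real MeasureTheory

/-- The digamma function: derivative of `log ∘ Γ`. -/
noncomputable def digamma (x : ℝ) : ℝ := deriv (fun y : ℝ => Real.log (Real.Gamma y)) x

/-!
Both sides change in the same way under `x ↦ x + 1`, and their difference tends to `0` at infinity,
so it vanishes. For `ψ` the shift is the functional equation `ψ (x + 1) = ψ x + 1 / x`, and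
log-convexity of `Γ` squeezes `log x - ψ x` between `0` and `1 / x`. For the integral, the partial
fraction expansion of `coth` turns `t / (exp (2πt) - 1)` into `t² ∑ 1 / (t² + n²)` up to elementary
terms; integrated termwise against `1 / (t² + x²) - 1 / (t² + (x + 1)²)`, it gives a telescoping
series. Taking differences is what makes the elementary terms integrable.
-/

open Set Filter Topology

section Limits

lemma eq_of_tendsto_atTop_of_forall_add_one_eq {X : Type*} [TopologicalSpace X] [T2Space X]
    {f : ℝ → X} {x : ℝ} {l : X} (hf : ∀ y, x ≤ y → f (y + 1) = f y)
    (hl : Tendsto f atTop (𝓝 l)) : f x = l := by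
  have hconst (n : ℕ) : f (x + n) = f x := by
    induction n with
    | zero => simp
    | succ n ih => rw [Nat.cast_succ, ← add_assoc, hf _ (by simp), ih]
  have hlim : Tendsto (fun n : ℕ => f (x + n)) atTop (𝓝 l) :=
    hl.comp (tendsto_atTop_add_const_left _ _ tendsto_natCast_atTop_atTop)
  simp_rw [hconst] at hlim
  exact tendsto_nhds_unique tendsto_const_nhds hlim

lemma hasSum_sub_succ_of_antitone {f : ℕ → ℝ} {l : ℝ} (hf : Antitone f)
    (hl : Tendsto f atTop (𝓝 l)) :
    HasSum (fun n => f n - f (n + 1)) (f 0 - l) :=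
  (hasSum_iff_tendsto_nat_of_nonneg (fun n => sub_nonneg.2 (hf n.le_succ)) _).2 <| by
    simpa only [Finset.sum_range_sub'] using hl.const_sub (f 0)

lemma hasSum_one_div_add_sub_one_div_add_one_add {x : ℝ} (hx : 0 < x) :
    HasSum (fun n : ℕ => 1 / (x + n) - 1 / (x + 1 + n)) (1 / x) := by
  have hanti : Antitone fun n : ℕ => 1 / (x + n) := fun m n hmn => by
    dsimp only
    gcongr
  have hlim : Tendsto (fun n : ℕ => 1 / (x + n)) atTop (𝓝 0) := by
    simp_rw [one_div]
    exact (tendsto_atTop_add_const_left _ _ tendsto_natCast_atTop_atTop).inv_tendsto_atTop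
  simpa [add_assoc, add_comm (1 : ℝ)] using hasSum_sub_succ_of_antitone hanti hlim

lemma hasSum_integral_of_nonneg {α ι : Type*} [MeasurableSpace α] {μ : Measure α} [Countable ι]
    {F : ι → α → ℝ} {f : α → ℝ} (hF : ∀ i, AEStronglyMeasurable (F i) μ)
    (hF_nonneg : ∀ i, 0 ≤ᵐ[μ] F i) (hf : Integrable f μ)
    (hsum : ∀ᵐ a ∂μ, HasSum (fun i => F i a) (f a)) :
    HasSum (fun i => ∫ a, F i a ∂μ) (∫ a, f a ∂μ) := by
  refine hasSum_integral_of_dominated_convergence F hF (fun i => ?_)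
    (hsum.mono fun a ha => ha.summable) (hf.congr (hsum.mono fun a ha => ha.tsum_eq.symm)) hsum
  filter_upwards [hF_nonneg i] with a ha using (norm_of_nonneg ha).le

end Limits

section RationalIntegrals

lemma integrable_inv_sq_add_sq {a : ℝ} (ha : a ≠ 0) :
    Integrable fun t : ℝ => (t ^ 2 + a ^ 2)⁻¹ := by
  refine ((integrable_inv_one_add_sq.comp_div ha).const_mul (a ^ 2)⁻¹).congr
    (ae_of_all _ fun t => ?_)
  dsimp only
  field_simp
  ring

lemma integral_Ioi_inv_sq_add_sq {a : ℝ} (ha : 0 < a) :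
    ∫ t in Ioi 0, (t ^ 2 + a ^ 2)⁻¹ = π / (2 * a) := by
  have hscale (t : ℝ) : (t ^ 2 + a ^ 2)⁻¹ = (a ^ 2)⁻¹ * (1 + (a⁻¹ * t) ^ 2)⁻¹ := by
    field_simp
    ring
  simp_rw [hscale]
  rw [integral_const_mul, integral_comp_mul_left_Ioi (fun t => (1 + t ^ 2)⁻¹) 0 (inv_pos.2 ha),
    mul_zero, integral_Ioi_inv_one_add_sq, arctan_zero, sub_zero, smul_eq_mul, inv_inv]
  field_simp

lemma tendsto_inv_sq_add_sq_atTop (a : ℝ) :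
    Tendsto (fun t : ℝ => (t ^ 2 + a ^ 2)⁻¹) atTop (𝓝 0) :=
  (tendsto_atTop_add_const_right _ _ (tendsto_pow_atTop two_ne_zero)).inv_tendsto_atTop

lemma tendsto_div_sq_add_sq_atTop (a : ℝ) :
    Tendsto (fun t : ℝ => t / (t ^ 2 + a ^ 2)) atTop (𝓝 0) := by
  refine squeeze_zero' ?_ ?_ tendsto_inv_atTop_zero
  · filter_upwards [eventually_gt_atTop 0] with t ht
    positivity
  · filter_upwards [eventually_gt_atTop 0] with t ht
    rw [← one_div, div_le_div_iff₀ (by positivity) ht]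
    nlinarith [sq_nonneg a]

lemma integrable_sq_div_sq_add_sq_mul_sq_add_sq (a : ℝ) {b : ℝ} (hb : b ≠ 0) :
    Integrable fun t : ℝ => t ^ 2 / ((t ^ 2 + a ^ 2) * (t ^ 2 + b ^ 2)) := by
  refine (integrable_inv_sq_add_sq hb).mono' (Measurable.aestronglyMeasurable (by fun_prop))
    (ae_of_all _ fun t => ?_)
  rw [norm_of_nonneg (by positivity), ← div_div, div_eq_mul_inv _ (t ^ 2 + b ^ 2)]
  refine mul_le_of_le_one_left (by positivity) (div_le_one_of_le₀ ?_ (by positivity))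
  linarith [sq_nonneg a]

lemma integral_Ioi_sq_div_sq_add_sq_mul_self {a : ℝ} (ha : 0 < a) :
    ∫ t in Ioi 0, t ^ 2 / ((t ^ 2 + a ^ 2) * (t ^ 2 + a ^ 2)) = π / (4 * a) := by
  have hint₁ := (integrable_inv_sq_add_sq ha.ne').integrableOn (s := Ioi 0)
  have hint₂ := ((integrable_sq_div_sq_add_sq_mul_sq_add_sq a ha.ne').const_mul 2).integrableOn
    (s := Ioi 0)
  have hderiv (t : ℝ) : HasDerivAt (fun t => t / (t ^ 2 + a ^ 2))
      ((t ^ 2 + a ^ 2)⁻¹ - 2 * (t ^ 2 / ((t ^ 2 + a ^ 2) * (t ^ 2 + a ^ 2)))) t := by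
    refine ((hasDerivAt_id' t).div ((hasDerivAt_pow 2 t).add_const (a ^ 2))
      (by positivity)).congr_deriv ?_
    field_simp
    ring
  have hparts := integral_Ioi_of_hasDerivAt_of_tendsto' (a := 0) (fun t _ => hderiv t)
    (hint₁.sub hint₂) (tendsto_div_sq_add_sq_atTop a)
  rw [integral_sub hint₁ hint₂, integral_const_mul, integral_Ioi_inv_sq_add_sq ha,
    zero_div] at hparts
  have hdouble : π / (2 * a) = 2 * (π / (4 * a)) := by ring
  linarith

lemma integral_Ioi_sq_div_sq_add_sq_mul_sq_add_sq {a b : ℝ} (ha : 0 < a) (hb : 0 < b) :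
    ∫ t in Ioi 0, t ^ 2 / ((t ^ 2 + a ^ 2) * (t ^ 2 + b ^ 2)) = π / (2 * (a + b)) := by
  rcases eq_or_ne a b with rfl | hab
  · rw [integral_Ioi_sq_div_sq_add_sq_mul_self ha]
    ring
  have hsq : a ^ 2 - b ^ 2 ≠ 0 := by
    rw [sq_sub_sq]
    exact mul_ne_zero (by positivity) (sub_ne_zero.2 hab)
  have hpartial (t : ℝ) : t ^ 2 / ((t ^ 2 + a ^ 2) * (t ^ 2 + b ^ 2)) =
      (a ^ 2 * (t ^ 2 + a ^ 2)⁻¹ - b ^ 2 * (t ^ 2 + b ^ 2)⁻¹) / (a ^ 2 - b ^ 2) := by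
    field_simp
    ring
  simp_rw [hpartial]
  rw [integral_div, integral_sub ((integrable_inv_sq_add_sq ha.ne').const_mul _).integrableOn
      ((integrable_inv_sq_add_sq hb.ne').const_mul _).integrableOn,
    integral_const_mul, integral_const_mul, integral_Ioi_inv_sq_add_sq ha,
    integral_Ioi_inv_sq_add_sq hb]
  field_simp
  ring

lemma integrable_div_sq_add_sq_sub {a b : ℝ} (ha : a ≠ 0) (hb : b ≠ 0) :
    Integrable fun t : ℝ => t / (t ^ 2 + a ^ 2) - t / (t ^ 2 + b ^ 2) := by
  have hdiff (t : ℝ) : t / (t ^ 2 + a ^ 2) - t / (t ^ 2 + b ^ 2) =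
      t / (t ^ 2 + a ^ 2) * ((b ^ 2 - a ^ 2) * (t ^ 2 + b ^ 2)⁻¹) := by
    field_simp
    ring
  have hbound (t : ℝ) : ‖t / (t ^ 2 + a ^ 2)‖ ≤ (2 * |a|)⁻¹ := by
    rw [norm_div, norm_of_nonneg (by positivity : 0 ≤ t ^ 2 + a ^ 2), norm_eq_abs, ← one_div,
      div_le_div_iff₀ (by positivity) (by positivity), ← sq_abs t, ← sq_abs a]
    linarith [two_mul_le_add_sq |t| |a|]
  simp_rw [hdiff]
  exact ((integrable_inv_sq_add_sq hb).const_mul _).bdd_mul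
    (Measurable.aestronglyMeasurable (by fun_prop)) (ae_of_all _ hbound)

lemma integral_Ioi_div_sq_add_sq_sub {a b : ℝ} (ha : a ≠ 0) (hb : b ≠ 0) :
    ∫ t in Ioi 0, (t / (t ^ 2 + a ^ 2) - t / (t ^ 2 + b ^ 2)) = log b - log a := by
  have hderiv {c : ℝ} (hc : c ≠ 0) (t : ℝ) :
      HasDerivAt (fun t => log (t ^ 2 + c ^ 2) / 2) (t / (t ^ 2 + c ^ 2)) t := by
    refine ((((hasDerivAt_pow 2 t).add_const (c ^ 2)).log (by positivity)).div_const
      2).congr_deriv ?_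
    field_simp
    simp [mul_comm]
  have hlim : Tendsto (fun t => log (t ^ 2 + a ^ 2) / 2 - log (t ^ 2 + b ^ 2) / 2)
      atTop (𝓝 0) := by
    have hratio : Tendsto (fun t => 1 + (a ^ 2 - b ^ 2) * (t ^ 2 + b ^ 2)⁻¹) atTop (𝓝 1) := by
      simpa using ((tendsto_inv_sq_add_sq_atTop b).const_mul (a ^ 2 - b ^ 2)).const_add 1
    have hlog := (hratio.log one_ne_zero).div_const 2
    rw [log_one, zero_div] at hlog
    refine hlog.congr fun t => ?_
    rw [← sub_div, ← log_div (by positivity) (by positivity)]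
    congr 2
    field_simp
    ring
  rw [integral_Ioi_of_hasDerivAt_of_tendsto' (fun t _ => (hderiv ha t).sub (hderiv hb t))
    (integrable_div_sq_add_sq_sub ha hb).integrableOn hlim]
  simp

end RationalIntegrals

section Cotangent

lemma exp_two_pi_mul_sub_one_ne_zero {t : ℝ} (ht : t ≠ 0) : exp (2 * π * t) - 1 ≠ 0 :=
  sub_ne_zero.2 <| (exp_eq_one_iff _).not.2 (by positivity)

open Complex in
lemma cot_pi_mul_ofReal_mul_I {t : ℝ} (ht : t ≠ 0) :
    cot (π * (t * I)) = -I * (1 + 2 / (Real.exp (2 * π * t) - 1) : ℝ) := by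
  have hexp : Complex.exp (2 * π * I * (t * I)) = ((Real.exp (2 * π * t))⁻¹ : ℝ) := by
    rw [← Real.exp_neg, ofReal_exp]
    congr 1
    push_cast
    linear_combination (2 * (π : ℂ) * t) * I_sq
  have hE : (Real.exp (2 * π * t) : ℂ) ≠ 0 := mod_cast (Real.exp_pos _).ne'
  have hE_sub : (Real.exp (2 * π * t) : ℂ) - 1 ≠ 0 :=
    mod_cast exp_two_pi_mul_sub_one_ne_zero ht
  rw [cot_pi_eq_exp_ratio, hexp, ← div_div, div_eq_mul_inv _ I, inv_I]
  push_cast at hE hE_sub ⊢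
  field_simp
  ring

open Complex in
lemma hasSum_inv_sq_add_succ_sq {t : ℝ} (ht : t ≠ 0) :
    HasSum (fun n : ℕ => (t ^ 2 + ((n : ℝ) + 1) ^ 2)⁻¹)
      ((π * (1 + 2 / (Real.exp (2 * π * t) - 1)) - 1 / t) / (2 * t)) := by
  have hz : t * I ∈ integerComplement := by
    rintro ⟨m, hm⟩
    exact ht (by simpa using (congrArg im hm).symm)
  have htC : (t : ℂ) ≠ 0 := mod_cast ht
  have hcot := (summable_cotTerm hz).hasSum
  rw [← cot_series_rep' hz, cot_pi_mul_ofReal_mul_I ht] at hcot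
  have hterm (n : ℕ) :
      ((t ^ 2 + ((n : ℝ) + 1) ^ 2)⁻¹ : ℝ) = I / (2 * t) * cotTerm (t * I) n := by
    have hprod : (t * I + (n + 1)) * (t * I - (n + 1)) = -((t ^ 2 + (n + 1) ^ 2 : ℝ) : ℂ) := by
      push_cast
      linear_combination (t : ℂ) ^ 2 * I_sq
    rw [cotTerm_identity hz, hprod]
    field_simp
    simp [neg_div]
  have hvalue : ((π * (1 + 2 / (Real.exp (2 * π * t) - 1)) - 1 / t) / (2 * t) : ℝ) =
      I / (2 * t) *
        (π * (-I * (1 + 2 / (Real.exp (2 * π * t) - 1) : ℝ)) - 1 / (t * I)) := by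
    generalize 1 + 2 / (Real.exp (2 * π * t) - 1) = c
    push_cast
    field_simp
    linear_combination (π * c * t : ℂ) * I_sq
  rw [← hasSum_ofReal, hvalue]
  simp_rw [hterm]
  exact hcot.mul_left _

end Cotangent

section BinetIntegral

/-- The integrand of Binet's second formula, as a function of the variable `t` of integration with
parameter `a`. -/
noncomputable def binetKernel (a t : ℝ) : ℝ := t / ((t ^ 2 + a ^ 2) * (exp (2 * π * t) - 1))

/-- The integral in Binet's second formula, as a function of its parameter. -/
noncomputable def binetIntegral (a : ℝ) : ℝ := ∫ t in Ioi 0, binetKernel a t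

lemma binetKernel_nonneg (a : ℝ) {t : ℝ} (ht : 0 ≤ t) : 0 ≤ binetKernel a t := by
  have : 0 ≤ exp (2 * π * t) - 1 := sub_nonneg.2 (one_le_exp (by positivity))
  unfold binetKernel
  positivity

lemma binetKernel_le (a : ℝ) {t : ℝ} (ht : 0 < t) :
    binetKernel a t ≤ (2 * π)⁻¹ * (t ^ 2 + a ^ 2)⁻¹ := by
  have hexp : 2 * π * t ≤ exp (2 * π * t) - 1 := le_sub_iff_add_le.2 (add_one_le_exp _)
  calc
    binetKernel a t ≤ t / ((t ^ 2 + a ^ 2) * (2 * π * t)) := by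
      unfold binetKernel
      gcongr
    _ = (2 * π)⁻¹ * (t ^ 2 + a ^ 2)⁻¹ := by field_simp

lemma integrableOn_binetKernel {a : ℝ} (ha : a ≠ 0) : IntegrableOn (binetKernel a) (Ioi 0) := by
  refine ((integrable_inv_sq_add_sq ha).const_mul (2 * π)⁻¹).integrableOn.mono'
    (Measurable.aestronglyMeasurable (by unfold binetKernel; fun_prop)) ?_
  filter_upwards [ae_restrict_mem measurableSet_Ioi] with t ht
  rw [norm_of_nonneg (binetKernel_nonneg a (mem_Ioi.1 ht).le)]
  exact binetKernel_le a ht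

lemma binetIntegral_nonneg (a : ℝ) : 0 ≤ binetIntegral a :=
  setIntegral_nonneg measurableSet_Ioi fun _ ht => binetKernel_nonneg a (mem_Ioi.1 ht).le

lemma binetIntegral_le {a : ℝ} (ha : 0 < a) : binetIntegral a ≤ 1 / (4 * a) :=
  calc
    binetIntegral a ≤ ∫ t in Ioi 0, (2 * π)⁻¹ * (t ^ 2 + a ^ 2)⁻¹ :=
      setIntegral_mono_on (integrableOn_binetKernel ha.ne')
        ((integrable_inv_sq_add_sq ha.ne').const_mul _).integrableOn measurableSet_Ioi
        fun _ ht => binetKernel_le a ht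
    _ = 1 / (4 * a) := by
      rw [integral_const_mul, integral_Ioi_inv_sq_add_sq ha]
      field_simp
      norm_num

lemma tendsto_binetIntegral_atTop : Tendsto binetIntegral atTop (𝓝 0) := by
  refine squeeze_zero' (.of_forall binetIntegral_nonneg)
    ((eventually_gt_atTop 0).mono fun _ ha => binetIntegral_le ha) ?_
  simp_rw [one_div]
  exact (tendsto_id.const_mul_atTop four_pos).inv_tendsto_atTop

lemma hasSum_sq_div_sq_add_sq_mul_sq_add_succ_sq (a : ℝ) {t : ℝ} (ht : t ≠ 0) :
    HasSum (fun n : ℕ => t ^ 2 / ((t ^ 2 + a ^ 2) * (t ^ 2 + ((n : ℝ) + 1) ^ 2)))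
      (π * binetKernel a t + π / 2 * (t / (t ^ 2 + a ^ 2)) - 1 / 2 * (t ^ 2 + a ^ 2)⁻¹) := by
  have := exp_two_pi_mul_sub_one_ne_zero ht
  have hvalue : π * binetKernel a t + π / 2 * (t / (t ^ 2 + a ^ 2)) - 1 / 2 * (t ^ 2 + a ^ 2)⁻¹ =
      t ^ 2 / (t ^ 2 + a ^ 2) * ((π * (1 + 2 / (exp (2 * π * t) - 1)) - 1 / t) / (2 * t)) := by
    unfold binetKernel
    field_simp
    ring
  have hterm (n : ℕ) : t ^ 2 / ((t ^ 2 + a ^ 2) * (t ^ 2 + ((n : ℝ) + 1) ^ 2)) =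
      t ^ 2 / (t ^ 2 + a ^ 2) * (t ^ 2 + ((n : ℝ) + 1) ^ 2)⁻¹ := by
    rw [← div_div, div_eq_mul_inv _ (t ^ 2 + ((n : ℝ) + 1) ^ 2)]
  rw [hvalue]
  simp_rw [hterm]
  exact (hasSum_inv_sq_add_succ_sq ht).mul_left _

/-- The closed form that the partial fraction expansion of `coth` gives to the sum over `n` of
`(1 / (t ^ 2 + a ^ 2) - 1 / (t ^ 2 + b ^ 2)) * (t ^ 2 / (t ^ 2 + (n + 1) ^ 2))`. Each of its three
groups of terms is integrable over `t > 0`, which is used to compare the Binet integrals with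
parameters `a` and `b`. -/
noncomputable def binetDifference (a b t : ℝ) : ℝ :=
  π * (binetKernel a t - binetKernel b t) +
    π / 2 * (t / (t ^ 2 + a ^ 2) - t / (t ^ 2 + b ^ 2)) -
    1 / 2 * ((t ^ 2 + a ^ 2)⁻¹ - (t ^ 2 + b ^ 2)⁻¹)

lemma hasSum_binetDifference (a b : ℝ) {t : ℝ} (ht : t ≠ 0) :
    HasSum (fun n : ℕ => t ^ 2 / ((t ^ 2 + a ^ 2) * (t ^ 2 + ((n : ℝ) + 1) ^ 2)) -
      t ^ 2 / ((t ^ 2 + b ^ 2) * (t ^ 2 + ((n : ℝ) + 1) ^ 2))) (binetDifference a b t) := by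
  have hsplit : binetDifference a b t =
      π * binetKernel a t + π / 2 * (t / (t ^ 2 + a ^ 2)) - 1 / 2 * (t ^ 2 + a ^ 2)⁻¹ -
        (π * binetKernel b t + π / 2 * (t / (t ^ 2 + b ^ 2)) - 1 / 2 * (t ^ 2 + b ^ 2)⁻¹) := by
    unfold binetDifference
    ring
  rw [hsplit]
  exact (hasSum_sq_div_sq_add_sq_mul_sq_add_succ_sq a ht).sub
    (hasSum_sq_div_sq_add_sq_mul_sq_add_succ_sq b ht)

lemma integrableOn_binetDifference {a b : ℝ} (ha : a ≠ 0) (hb : b ≠ 0) :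
    IntegrableOn (binetDifference a b) (Ioi 0) :=
  ((((integrableOn_binetKernel ha).sub (integrableOn_binetKernel hb)).const_mul π).add
    ((integrable_div_sq_add_sq_sub ha hb).integrableOn.const_mul (π / 2))).sub
    (((integrable_inv_sq_add_sq ha).sub (integrable_inv_sq_add_sq hb)).integrableOn.const_mul
      (1 / 2))

lemma integral_Ioi_binetDifference {a b : ℝ} (ha : 0 < a) (hb : 0 < b) :
    ∫ t in Ioi 0, binetDifference a b t =
      π / 2 * (2 * (binetIntegral a - binetIntegral b) + (log b - log a) -
        (1 / a - 1 / b) / 2) := by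
  have hKa := integrableOn_binetKernel ha.ne'
  have hKb := integrableOn_binetKernel hb.ne'
  have hIa := (integrable_inv_sq_add_sq ha.ne').integrableOn (s := Ioi 0)
  have hIb := (integrable_inv_sq_add_sq hb.ne').integrableOn (s := Ioi 0)
  have hK : IntegrableOn (fun t => π * (binetKernel a t - binetKernel b t)) (Ioi 0) :=
    (hKa.sub hKb).const_mul π
  have hL : IntegrableOn (fun t => π / 2 * (t / (t ^ 2 + a ^ 2) - t / (t ^ 2 + b ^ 2))) (Ioi 0) :=
    (integrable_div_sq_add_sq_sub ha.ne' hb.ne').integrableOn.const_mul (π / 2)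
  have hI : IntegrableOn (fun t => 1 / 2 * ((t ^ 2 + a ^ 2)⁻¹ - (t ^ 2 + b ^ 2)⁻¹)) (Ioi 0) :=
    (hIa.sub hIb).const_mul (1 / 2)
  have hKL : IntegrableOn (fun t => π * (binetKernel a t - binetKernel b t) +
      π / 2 * (t / (t ^ 2 + a ^ 2) - t / (t ^ 2 + b ^ 2))) (Ioi 0) := hK.add hL
  calc
    ∫ t in Ioi 0, binetDifference a b t =
        π * (binetIntegral a - binetIntegral b) + π / 2 * (log b - log a) -
          1 / 2 * (π / (2 * a) - π / (2 * b)) := by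
      unfold binetDifference binetIntegral
      rw [integral_sub hKL hI, integral_add hK hL, integral_const_mul, integral_const_mul,
        integral_const_mul, integral_sub hKa hKb, integral_sub hIa hIb,
        integral_Ioi_div_sq_add_sq_sub ha.ne' hb.ne', integral_Ioi_inv_sq_add_sq ha,
        integral_Ioi_inv_sq_add_sq hb]
    _ = π / 2 * (2 * (binetIntegral a - binetIntegral b) + (log b - log a) -
        (1 / a - 1 / b) / 2) := by
      field_simp

lemma hasSum_one_div_add_succ_sub {a b : ℝ} (ha : 0 < a) (hab : a ≤ b) :
    HasSum (fun n : ℕ => 1 / (a + (n + 1)) - 1 / (b + (n + 1)))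
      (2 * (binetIntegral a - binetIntegral b) + (log b - log a) - (1 / a - 1 / b) / 2) := by
  have hb := ha.trans_le hab
  have hn (n : ℕ) : 0 < (n : ℝ) + 1 := by positivity
  have hint (c : ℝ) (n : ℕ) := (integrable_sq_div_sq_add_sq_mul_sq_add_sq c
    (hn n).ne').integrableOn (s := Ioi 0)
  have hsum := hasSum_integral_of_nonneg
    (fun n => ((hint a n).sub (hint b n)).aestronglyMeasurable)
    (fun n => ae_of_all _ fun t => sub_nonneg.2 (by dsimp only; gcongr))
    (integrableOn_binetDifference ha.ne' hb.ne')
    ((ae_restrict_mem measurableSet_Ioi).mono fun t ht =>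
      hasSum_binetDifference a b (mem_Ioi.1 ht).ne')
  have hterm (n : ℕ) : ∫ t in Ioi 0, (t ^ 2 / ((t ^ 2 + a ^ 2) * (t ^ 2 + ((n : ℝ) + 1) ^ 2)) -
      t ^ 2 / ((t ^ 2 + b ^ 2) * (t ^ 2 + ((n : ℝ) + 1) ^ 2))) =
      π / 2 * (1 / (a + (n + 1)) - 1 / (b + (n + 1))) := by
    rw [integral_sub (hint a n) (hint b n), integral_Ioi_sq_div_sq_add_sq_mul_sq_add_sq ha (hn n),
      integral_Ioi_sq_div_sq_add_sq_mul_sq_add_sq hb (hn n)]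
    field_simp
  simp_rw [Pi.sub_apply, hterm, integral_Ioi_binetDifference ha hb] at hsum
  exact (hasSum_mul_left_iff (by positivity)).1 hsum

lemma binetIntegral_sub_add_one {x : ℝ} (hx : 0 < x) :
    2 * (binetIntegral x - binetIntegral (x + 1)) =
      (1 / x + 1 / (x + 1)) / 2 - (log (x + 1) - log x) := by
  have hx₁ : 0 < x + 1 := by positivity
  have htelescope : HasSum (fun n : ℕ => 1 / (x + (n + 1)) - 1 / (x + 1 + (n + 1)))
      (1 / (x + 1)) := by
    simpa only [add_assoc, add_comm (1 : ℝ)] using hasSum_one_div_add_sub_one_div_add_one_add hx₁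
  linear_combination (hasSum_one_div_add_succ_sub hx (lt_add_one x).le).unique htelescope

end BinetIntegral

section Digamma

lemma log_Gamma_add_one {x : ℝ} (hx : 0 < x) :
    log (Gamma (x + 1)) = log (Gamma x) + log x := by
  rw [Gamma_add_one hx.ne', log_mul hx.ne' (Gamma_pos_of_pos hx).ne', add_comm]

lemma differentiableAt_log_Gamma {x : ℝ} (hx : 0 < x) :
    DifferentiableAt ℝ (fun y : ℝ => log (Gamma y)) x :=
  (differentiableOn_Gamma_Ioi.differentiableAt (Ioi_mem_nhds hx)).log (Gamma_pos_of_pos hx).ne'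

lemma digamma_add_one {x : ℝ} (hx : 0 < x) : digamma (x + 1) = digamma x + 1 / x := by
  unfold digamma
  rw [← deriv_comp_add_const, one_div, ← deriv_log,
    ← deriv_add (differentiableAt_log_Gamma hx) (differentiableAt_log hx.ne')]
  apply EventuallyEq.deriv_eq
  filter_upwards [eventually_gt_nhds hx] with y hy using log_Gamma_add_one hy

lemma slope_log_Gamma_add_one {x : ℝ} (hx : 0 < x) : slope (log ∘ Gamma) x (x + 1) = log x := by
  simp [slope_def_field, log_Gamma_add_one hx]

lemma digamma_le_log {x : ℝ} (hx : 0 < x) : digamma x ≤ log x := by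
  rw [← slope_log_Gamma_add_one hx]
  exact convexOn_log_Gamma.deriv_le_slope hx (mem_Ioi.2 (by positivity)) (lt_add_one x)
    (differentiableAt_log_Gamma hx)

lemma log_le_digamma_add_one {x : ℝ} (hx : 0 < x) : log x ≤ digamma (x + 1) := by
  have hx₁ : 0 < x + 1 := by positivity
  rw [← slope_log_Gamma_add_one hx]
  exact convexOn_log_Gamma.slope_le_deriv hx hx₁ (lt_add_one x) (differentiableAt_log_Gamma hx₁)

lemma tendsto_log_sub_digamma_atTop : Tendsto (fun x => log x - digamma x) atTop (𝓝 0) := by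
  refine squeeze_zero' ?_ ?_ tendsto_inv_atTop_zero
  · filter_upwards [eventually_gt_atTop 0] with x hx using sub_nonneg.2 (digamma_le_log hx)
  · filter_upwards [eventually_gt_atTop 0] with x hx
    have h := log_le_digamma_add_one hx
    rw [digamma_add_one hx, one_div] at h
    linarith

end Digamma

/-- Binet's second integral formula:
for `x > 0`, `log x - ψ(x) = 1/(2x) + 2∫₀^∞ t / ((t² + x²)(exp(2πt) - 1)) dt`. -/
theorem binet_second_integral (x : ℝ) (hx : 0 < x) :
    Real.log x - digamma x =
      1 / (2 * x) +
        2 * ∫ t in Set.Ioi (0 : ℝ),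
          t / ((t ^ 2 + x ^ 2) * (Real.exp (2 * Real.pi * t) - 1)) := by
  let remainder (y : ℝ) : ℝ := log y - digamma y - (1 / y / 2 + 2 * binetIntegral y)
  have hshift (y : ℝ) (hy : x ≤ y) : remainder (y + 1) = remainder y := by
    have hy₀ := hx.trans_le hy
    simp only [remainder, digamma_add_one hy₀]
    linear_combination binetIntegral_sub_add_one hy₀
  have hlim : Tendsto remainder atTop (𝓝 0) := by
    simpa [remainder] using tendsto_log_sub_digamma_atTop.sub
      ((tendsto_inv_atTop_zero.div_const 2).add (tendsto_binetIntegral_atTop.const_mul 2))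
  have hzero : remainder x = 0 := eq_of_tendsto_atTop_of_forall_add_one_eq hshift hlim
  have hhalf : 1 / (2 * x) = 1 / x / 2 := by rw [mul_comm, div_mul_eq_div_div]
  rw [hhalf]
  exact sub_eq_zero.1 hzero
end

section
/- Let T₁ : (0,∞) → (0,∞) be twice differentiable with nonvanishing derivative, and define U(z) = [T₁''(T₁⁻¹(z))/T₁'(T₁⁻¹(z)) - T₁'(T₁⁻¹(z))/z] · T₁⁻¹(z). Then U(z) = -1 for all z > 0 if and only if T₁ satisfies the differential equation d²/dx² log(T₁(x)) + (1/x) d/dx log(T₁(x)) = 0; in particular, T₁(x) = C x^{-s} for constants C > 0, s ≠ 0 are solutions. -/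
open Real

/-!
Write `y = log T` and `x = T⁻¹(z)`. Then `y' = T' / T`, so the logarithmic derivative of `y'` is
`T'' / T' - T' / T`, which is `U(z) / x`. Hence `y'' + y' / x = (y' / x) (U(z) + 1)`, and the factor
`y' / x` does not vanish.
-/

open Filter Topology

section LogDeriv

variable {𝕜 𝕜' : Type*} [NontriviallyNormedField 𝕜] [NontriviallyNormedField 𝕜']
  [NormedAlgebra 𝕜 𝕜']

theorem eventually_differentiableAt_of_continuousAt_deriv {f : 𝕜 → 𝕜'} {x : 𝕜}
    (hf' : ContinuousAt (deriv f) x) (hf'x : deriv f x ≠ 0) :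
    ∀ᶠ t in 𝓝 x, DifferentiableAt 𝕜 f t :=
  (hf'.eventually_ne hf'x).mono fun _ => differentiableAt_of_deriv_ne_zero

theorem deriv_logDeriv {f : 𝕜 → 𝕜'} {x : 𝕜} (hf' : DifferentiableAt 𝕜 (deriv f) x)
    (hfx : f x ≠ 0) (hf'x : deriv f x ≠ 0) :
    deriv (logDeriv f) x = logDeriv f x * (logDeriv (deriv f) x - logDeriv f x) := by
  have hlog : logDeriv (logDeriv f) x = logDeriv (deriv f) x - logDeriv f x :=
    logDeriv_div x hf'x hfx hf' (differentiableAt_of_deriv_ne_zero hf'x)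
  have hne : logDeriv f x ≠ 0 := div_ne_zero hf'x hfx
  rw [← hlog, logDeriv_apply (logDeriv f), mul_div_cancel₀ _ hne]

end LogDeriv

theorem deriv_log_comp_eventuallyEq_logDeriv {f : ℝ → ℝ} {x : ℝ}
    (hf : ∀ᶠ t in 𝓝 x, DifferentiableAt ℝ f t) (hfx : f x ≠ 0) :
    deriv (fun t => log (f t)) =ᶠ[𝓝 x] logDeriv f := by
  filter_upwards [hf, hf.self_of_nhds.continuousAt.eventually_ne hfx] with t hft hft0
  exact deriv_log_comp_eq_logDeriv hft hft0

theorem logDeriv_const_mul_rpow {C : ℝ} (hC : C ≠ 0) (p : ℝ) {x : ℝ} (hx : 0 < x) :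
    logDeriv (fun t : ℝ => C * t ^ p) x = p / x := by
  have hxp : x ^ p ≠ 0 := (rpow_pos_of_pos hx p).ne'
  rw [logDeriv_const_mul x C hC, logDeriv_apply, (hasDerivAt_rpow_const (Or.inl hx.ne')).deriv,
    rpow_sub_one hx.ne']
  field_simp

/-- The operator `y ↦ y'' + y' / x`, that is, the Laplacian of the plane acting on functions of the
radius; it is the left-hand side of the differential equation for `y = log T₁`. -/
noncomputable def planarRadialLaplacian (y : ℝ → ℝ) (x : ℝ) : ℝ :=
  deriv (deriv y) x + (1 / x) * deriv y x

theorem planarRadialLaplacian_eq_of_deriv_eventuallyEq {y g : ℝ → ℝ} {x : ℝ}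
    (h : deriv y =ᶠ[𝓝 x] g) : planarRadialLaplacian y x = deriv g x + (1 / x) * g x := by
  rw [planarRadialLaplacian, h.deriv_eq, h.eq_of_nhds]

theorem planarRadialLaplacian_log_comp {f : ℝ → ℝ} {x : ℝ}
    (hf' : DifferentiableAt ℝ (deriv f) x) (hfx : f x ≠ 0) (hf'x : deriv f x ≠ 0) (hx : x ≠ 0) :
    planarRadialLaplacian (fun t => log (f t)) x =
      logDeriv f x / x * ((logDeriv (deriv f) x - logDeriv f x) * x + 1) := by
  have hf : ∀ᶠ t in 𝓝 x, DifferentiableAt ℝ f t :=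
    eventually_differentiableAt_of_continuousAt_deriv hf'.continuousAt hf'x
  rw [planarRadialLaplacian_eq_of_deriv_eventuallyEq (deriv_log_comp_eventuallyEq_logDeriv hf hfx),
    deriv_logDeriv hf' hfx hf'x]
  field_simp

theorem planarRadialLaplacian_log_comp_eq_zero_iff {f : ℝ → ℝ} {x : ℝ}
    (hf' : DifferentiableAt ℝ (deriv f) x) (hfx : f x ≠ 0) (hf'x : deriv f x ≠ 0) (hx : x ≠ 0) :
    planarRadialLaplacian (fun t => log (f t)) x = 0 ↔
      (logDeriv (deriv f) x - logDeriv f x) * x = -1 := by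
  have hne : logDeriv f x / x ≠ 0 := div_ne_zero (div_ne_zero hf'x hfx) hx
  rw [planarRadialLaplacian_log_comp hf' hfx hf'x hx, mul_eq_zero_iff_left hne,
    eq_neg_iff_add_eq_zero]

theorem planarRadialLaplacian_log_const_mul_rpow {C : ℝ} (hC : C ≠ 0) (p : ℝ) {x : ℝ}
    (hx : 0 < x) : planarRadialLaplacian (fun t => log (C * t ^ p)) x = 0 := by
  have hpos : ∀ᶠ t in 𝓝 x, 0 < t := lt_mem_nhds hx
  have hdiff : ∀ᶠ t in 𝓝 x, DifferentiableAt ℝ (fun t : ℝ => C * t ^ p) t :=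
    hpos.mono fun t ht => (differentiableAt_rpow_const_of_ne p ht.ne').const_mul C
  have hlog : deriv (fun t => log (C * t ^ p)) =ᶠ[𝓝 x] fun t => p / t :=
    (deriv_log_comp_eventuallyEq_logDeriv hdiff
      (mul_ne_zero hC (rpow_pos_of_pos hx p).ne')).trans
      (hpos.mono fun _ => logDeriv_const_mul_rpow hC p)
  have hderiv : deriv (fun t => p / t) x = -p / x ^ 2 := by
    simp only [div_eq_mul_inv, deriv_const_mul_field, deriv_inv, mul_neg, neg_mul]
  rw [planarRadialLaplacian_eq_of_deriv_eventuallyEq hlog, hderiv]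
  field_simp
  ring

theorem U_eq_neg_one_iff_ODE_general {T₁ Tinv : ℝ → ℝ} {s : Set ℝ} (hs : 0 ∉ s)
    (hdiff : ∀ x ∈ s, DifferentiableAt ℝ (deriv T₁) x)
    (hderiv : ∀ x ∈ s, deriv T₁ x ≠ 0)
    (hne : ∀ x ∈ s, T₁ x ≠ 0)
    (hinv : Set.LeftInvOn Tinv T₁ s) :
    (∀ z ∈ T₁ '' s,
        (deriv (deriv T₁) (Tinv z) / deriv T₁ (Tinv z) -
          deriv T₁ (Tinv z) / z) * Tinv z = -1) ↔
      ∀ x ∈ s, planarRadialLaplacian (fun t => log (T₁ t)) x = 0 := by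
  rw [Set.forall_mem_image]
  refine forall₂_congr fun x hx => ?_
  rw [hinv hx]
  exact (planarRadialLaplacian_log_comp_eq_zero_iff
    (hdiff x hx) (hne x hx) (hderiv x hx) (ne_of_mem_of_not_mem hx hs)).symm

/-- `U(z) = -1` for all `z > 0` iff `log ∘ T₁` satisfies the ODE
`(log T₁)'' + (1/x)(log T₁)' = 0` on `(0,∞)`; in particular `T₁(x) = C x^{-s}`
satisfies the ODE. -/
theorem U_eq_neg_one_iff_ODE (T₁ Tinv : ℝ → ℝ)
    (hdiff : ContDiffOn ℝ 2 T₁ (Set.Ioi 0))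
    (hderiv : ∀ x : ℝ, 0 < x → deriv T₁ x ≠ 0)
    (hpos : ∀ x : ℝ, 0 < x → 0 < T₁ x)
    (hinv : ∀ x : ℝ, 0 < x → Tinv (T₁ x) = x)
    (hinv' : ∀ z : ℝ, 0 < z → 0 < Tinv z ∧ T₁ (Tinv z) = z) :
    ((∀ z : ℝ, 0 < z →
        (deriv (deriv T₁) (Tinv z) / deriv T₁ (Tinv z) -
          deriv T₁ (Tinv z) / z) * Tinv z = -1) ↔
      (∀ x : ℝ, 0 < x →
        deriv (deriv (fun t : ℝ => Real.log (T₁ t))) x +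
          (1 / x) * deriv (fun t : ℝ => Real.log (T₁ t)) x = 0)) ∧
    (∀ C s : ℝ, 0 < C → s ≠ 0 → ∀ x : ℝ, 0 < x →
      deriv (deriv (fun t : ℝ => Real.log (C * t ^ (-s)))) x +
        (1 / x) * deriv (fun t : ℝ => Real.log (C * t ^ (-s))) x = 0) := by
  have himage : T₁ '' Set.Ioi 0 = Set.Ioi 0 :=
    Set.SurjOn.image_eq_of_mapsTo (fun z hz => ⟨Tinv z, hinv' z hz⟩) hpos
  have hdiff' : ∀ x ∈ Set.Ioi 0, DifferentiableAt ℝ (deriv T₁) x := fun x hx =>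
    ((hdiff.deriv_of_isOpen (m := 1) isOpen_Ioi (by norm_num)).differentiableOn
      one_ne_zero).differentiableAt (Ioi_mem_nhds hx)
  have hiff := U_eq_neg_one_iff_ODE_general Set.self_notMem_Ioi hdiff' hderiv
    (fun x hx => (hpos x hx).ne') hinv
  rw [himage] at hiff
  exact ⟨hiff, fun C s hC _ x hx => planarRadialLaplacian_log_const_mul_rpow hC.ne' (-s) hx⟩
end
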